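/- The abelianization of P is isomorphic to ℤ/4ℤ × ℤ/4ℤ. -/

import Mathlib

noncomputable section

/-- The two relators of the Promislow group `P = ⟨a, b | b⁻¹a²b = a⁻², a⁻¹b²a = b⁻²⟩`,
written as words that equal the identity: `b⁻¹a²ba²` and `a⁻¹b²ab²`. -/
def Prels : Set (FreeGroup (Fin 2)) :=
  {(FreeGroup.of 1)⁻¹ * (FreeGroup.of 0) ^ 2 * (FreeGroup.of 1) * (FreeGroup.of 0) ^ 2,
   (FreeGroup.of 0)⁻¹ * (FreeGroup.of 1) ^ 2 * (FreeGroup.of 0) * (FreeGroup.of 1) ^ 2}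

/-- The Promislow group. -/
abbrev P : Type := PresentedGroup Prels

def pa : P := PresentedGroup.of 0
def pb : P := PresentedGroup.of 1
def px : P := pa ^ 2
def py : P := pb ^ 2
def pz : P := (pa * pb) ^ 2

/-- The images of the generators in the target. -/
def tgt : Fin 2 → Multiplicative (ZMod 4 × ZMod 4) :=
  ![Multiplicative.ofAdd (1, 0), Multiplicative.ofAdd (0, 1)]

lemma tgt_rels : ∀ r ∈ Prels, FreeGroup.lift tgt r = 1 := by
  intro r hr
  rcases hr with rfl | rfl
  · simp only [map_mul, map_inv, map_pow, FreeGroup.lift_apply_of]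
    decide
  · simp only [map_mul, map_inv, map_pow, FreeGroup.lift_apply_of]
    decide

/-- The map from the abelianization to the target. -/
def fwd : Abelianization P →* Multiplicative (ZMod 4 × ZMod 4) :=
  Abelianization.lift (PresentedGroup.toGroup tgt_rels)

lemma rel_a : pb⁻¹ * pa ^ 2 * pb * pa ^ 2 = 1 :=
  PresentedGroup.one_of_mem (rels := Prels) (Or.inl rfl)

lemma rel_b : pa⁻¹ * pb ^ 2 * pa * pb ^ 2 = 1 :=
  PresentedGroup.one_of_mem (rels := Prels) (Or.inr rfl)

lemma ab_pow {G : Type*} [CommGroup G] (x y : G) (h : y⁻¹ * x ^ 2 * y * x ^ 2 = 1) :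
    x ^ 4 = 1 := by
  rw [← h, mul_right_comm y⁻¹, inv_mul_cancel, one_mul, ← pow_add]

lemma pa_four : (Abelianization.of pa) ^ 4 = 1 := by
  apply ab_pow _ (Abelianization.of pb)
  simpa only [map_mul, map_inv, map_pow, map_one] using congrArg Abelianization.of rel_a

lemma pb_four : (Abelianization.of pb) ^ 4 = 1 := by
  apply ab_pow _ (Abelianization.of pa)
  simpa only [map_mul, map_inv, map_pow, map_one] using congrArg Abelianization.of rel_b

lemma cyc_aux (x : Abelianization P) (hx : x ^ 4 = 1) :
    zmultiplesHom (Additive (Abelianization P)) (Additive.ofMul x) ((4 : ℕ) : ℤ) = 0 := by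
  rw [zmultiplesHom_apply, natCast_zsmul, ← ofMul_pow, hx, ofMul_one]

/-- The homomorphism from `ℤ/4` given by an element killed by `4`. -/
def cyc (x : Abelianization P) (hx : x ^ 4 = 1) : ZMod 4 →+ Additive (Abelianization P) :=
  ZMod.lift 4 ⟨zmultiplesHom _ (Additive.ofMul x), cyc_aux x hx⟩

lemma cyc_one (x : Abelianization P) (hx : x ^ 4 = 1) : cyc x hx 1 = Additive.ofMul x := by
  have := ZMod.lift_coe 4 (A := Additive (Abelianization P))
    ⟨zmultiplesHom _ (Additive.ofMul x), cyc_aux x hx⟩ 1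
  simpa [cyc] using this

/-- The inverse map. -/
def bwd : Multiplicative (ZMod 4 × ZMod 4) →* Abelianization P :=
  AddMonoidHom.toMultiplicativeLeft ((cyc _ pa_four).coprod (cyc _ pb_four))

lemma bwd_a : bwd (Multiplicative.ofAdd (1, 0)) = Abelianization.of pa := by
  change ((cyc _ pa_four).coprod (cyc _ pb_four) (1, 0)).toMul = _
  simp [cyc_one]

lemma bwd_b : bwd (Multiplicative.ofAdd (0, 1)) = Abelianization.of pb := by
  change ((cyc _ pa_four).coprod (cyc _ pb_four) (0, 1)).toMul = _
  simp [cyc_one]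

lemma fwd_a : fwd (Abelianization.of pa) = Multiplicative.ofAdd (1, 0) := by
  simp [fwd, pa, tgt]

lemma fwd_b : fwd (Abelianization.of pb) = Multiplicative.ofAdd (0, 1) := by
  simp [fwd, pb, tgt]

lemma bwd_fwd : bwd.comp fwd = MonoidHom.id _ := by
  apply Abelianization.hom_ext
  apply PresentedGroup.ext
  intro i
  fin_cases i
  · change bwd (fwd (Abelianization.of pa)) = Abelianization.of pa
    rw [fwd_a, bwd_a]
  · change bwd (fwd (Abelianization.of pb)) = Abelianization.of pb
    rw [fwd_b, bwd_b]

lemma tgt_gen : ∀ m : Multiplicative (ZMod 4 × ZMod 4), m =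
    Multiplicative.ofAdd ((1, 0) : ZMod 4 × ZMod 4) ^ (m.toAdd.1.val) *
    Multiplicative.ofAdd ((0, 1) : ZMod 4 × ZMod 4) ^ (m.toAdd.2.val) := by
  rintro ⟨x, y⟩
  change (x, y) = x.val • ((1, 0) : ZMod 4 × ZMod 4) + y.val • ((0, 1) : ZMod 4 × ZMod 4)
  simp

lemma fwd_bwd : fwd.comp bwd = MonoidHom.id _ := by
  refine MonoidHom.ext fun m => ?_
  rw [tgt_gen m]
  simp only [MonoidHom.comp_apply, map_mul, map_pow, bwd_a, bwd_b, fwd_a, fwd_b,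
    MonoidHom.id_apply]

/-- The abelianization of `P` is isomorphic to `ℤ/4ℤ × ℤ/4ℤ`. -/
theorem abelianization_P :
    Nonempty (Abelianization P ≃* Multiplicative (ZMod 4 × ZMod 4)) := 
  ⟨MonoidHom.toMulEquiv fwd bwd bwd_fwd fwd_bwd⟩
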